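/- Let M be a finite nonempty set of alternatives partitioned into nests via B, with θ > 0, dissimilarity factors τ_N ∈ (0,1], and utilities (V_m). At the nested logit probability vector p_m = ( exp(IV_{B(m)}) / Σ_N exp(IV_N) ) · ( exp(θ V_m / τ_{B(m)}) / Σ_{m'∈B(m)} exp(θ V_{m'} / τ_{B(m)}) ), the nested choice equation holds: Σ_{m∈M} V_m p_m − (1/θ) Σ_{m∈M} [ τ_{B(m)} p_m ln p_m + (1 − τ_{B(m)}) p_m ln( Σ_{m'∈B(m)} p_{m'} ) ] = (1/θ) ln( Σ_N exp(IV_N) ), where IV_N = τ_N ln Σ_{m∈N} exp(θ V_m/τ_N). -/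

import Mathlib

open Real Finset

/-!
Write `p m = P N * Q m` with `N = B m`, where `P` is the logit over nests and `Q` the logit within
a nest. The probabilities in `N` sum to `P N`, so the bracket in the nested choice equation is
`p m * (log (P N) + τ N * log (Q m))`. Here `log (P N) = IV N - log Z`, with `Z = ∑ N, exp (IV N)`,
and `τ N * log (Q m) = θ * V m - IV N`: the inclusive value cancels and the bracket is
`p m * (θ * V m - log Z)`. Summing over `m` with `∑ m, p m = 1` gives the claim.
-/

namespace NestedLogit

variable {M 𝒩 : Type*} [Fintype M] [DecidableEq 𝒩]

/-- The denominator of the logit within nest `N`. It is `0` when `N` is not in the range of `B`. -/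
noncomputable def nestSum (B : M → 𝒩) (θ : ℝ) (τ : 𝒩 → ℝ) (V : M → ℝ) (N : 𝒩) : ℝ :=
  ∑ m with B m = N, exp (θ * V m / τ N)

/-- The inclusive value `IV_N` of nest `N`, the utility that represents the nest as a whole in the
choice between nests. -/
noncomputable def inclusiveValue (B : M → 𝒩) (θ : ℝ) (τ : 𝒩 → ℝ) (V : M → ℝ) (N : 𝒩) : ℝ :=
  τ N * log (nestSum B θ τ V N)

/-- The probability of choosing alternative `m` given that its nest `B m` is chosen. -/
noncomputable def condProb (B : M → 𝒩) (θ : ℝ) (τ : 𝒩 → ℝ) (V : M → ℝ) (m : M) : ℝ :=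
  exp (θ * V m / τ (B m)) / nestSum B θ τ V (B m)

/-- The probability of choosing nest `N`, the logit of the inclusive values. -/
noncomputable def nestProb [Fintype 𝒩] (B : M → 𝒩) (θ : ℝ) (τ : 𝒩 → ℝ) (V : M → ℝ) (N : 𝒩) : ℝ :=
  exp (inclusiveValue B θ τ V N) / ∑ N', exp (inclusiveValue B θ τ V N')

/-- The nested logit probability of alternative `m`. -/
noncomputable def prob [Fintype 𝒩] (B : M → 𝒩) (θ : ℝ) (τ : 𝒩 → ℝ) (V : M → ℝ) (m : M) : ℝ :=
  nestProb B θ τ V (B m) * condProb B θ τ V m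

variable {B : M → 𝒩} (θ : ℝ) (τ : 𝒩 → ℝ) (V : M → ℝ)

theorem nestSum_pos {N : 𝒩} (hN : N ∈ Set.range B) : 0 < nestSum B θ τ V N := by
  obtain ⟨m, hm⟩ := hN
  exact sum_pos (fun _ _ => exp_pos _) ⟨m, by simp [hm]⟩

theorem condProb_pos (m : M) : 0 < condProb B θ τ V m :=
  div_pos (exp_pos _) (nestSum_pos θ τ V ⟨m, rfl⟩)

theorem sum_condProb_nest {N : 𝒩} (hN : N ∈ Set.range B) :
    ∑ m with B m = N, condProb B θ τ V m = 1 := by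
  calc ∑ m with B m = N, condProb B θ τ V m
      = ∑ m with B m = N, exp (θ * V m / τ N) / nestSum B θ τ V N :=
        sum_congr rfl fun m hm => by rw [condProb, (mem_filter.mp hm).2]
    _ = nestSum B θ τ V N / nestSum B θ τ V N := (sum_div _ _ _).symm
    _ = 1 := div_self (nestSum_pos θ τ V hN).ne'

variable {τ} in
theorem mul_log_condProb {m : M} (hτ : τ (B m) ≠ 0) :
    τ (B m) * log (condProb B θ τ V m) = θ * V m - inclusiveValue B θ τ V (B m) := by
  rw [condProb, log_div (exp_ne_zero _) (nestSum_pos θ τ V ⟨m, rfl⟩).ne', log_exp, mul_sub,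
    mul_div_cancel₀ _ hτ, inclusiveValue]

variable [Fintype 𝒩]

theorem sum_exp_inclusiveValue_pos [Nonempty 𝒩] : 0 < ∑ N, exp (inclusiveValue B θ τ V N) :=
  sum_pos (fun _ _ => exp_pos _) univ_nonempty

theorem nestProb_pos [Nonempty 𝒩] (N : 𝒩) : 0 < nestProb B θ τ V N :=
  div_pos (exp_pos _) (sum_exp_inclusiveValue_pos θ τ V)

theorem sum_nestProb [Nonempty 𝒩] : ∑ N, nestProb B θ τ V N = 1 := by
  simp only [nestProb]
  rw [← sum_div, div_self (sum_exp_inclusiveValue_pos θ τ V).ne']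

theorem log_nestProb [Nonempty 𝒩] (N : 𝒩) :
    log (nestProb B θ τ V N) =
      inclusiveValue B θ τ V N - log (∑ N', exp (inclusiveValue B θ τ V N')) := by
  rw [nestProb, log_div (exp_ne_zero _) (sum_exp_inclusiveValue_pos θ τ V).ne', log_exp]

theorem sum_prob_nest {N : 𝒩} (hN : N ∈ Set.range B) :
    ∑ m with B m = N, prob B θ τ V m = nestProb B θ τ V N := by
  calc ∑ m with B m = N, prob B θ τ V m
      = ∑ m with B m = N, nestProb B θ τ V N * condProb B θ τ V m :=
        sum_congr rfl fun m hm => by rw [prob, (mem_filter.mp hm).2]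
    _ = nestProb B θ τ V N := by rw [← mul_sum, sum_condProb_nest θ τ V hN, mul_one]

theorem sum_prob [Nonempty 𝒩] (hB : Function.Surjective B) : ∑ m, prob B θ τ V m = 1 := by
  calc ∑ m, prob B θ τ V m
      = ∑ N, ∑ m with B m = N, prob B θ τ V m := (sum_fiberwise univ B _).symm
    _ = ∑ N, nestProb B θ τ V N := sum_congr rfl fun N _ => sum_prob_nest θ τ V (hB N)
    _ = 1 := sum_nestProb θ τ V

theorem log_prob (m : M) :
    log (prob B θ τ V m) = log (nestProb B θ τ V (B m)) + log (condProb B θ τ V m) :=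
  have : Nonempty 𝒩 := ⟨B m⟩
  log_mul (nestProb_pos θ τ V _).ne' (condProb_pos θ τ V m).ne'

variable {τ} in
theorem mul_log_prob_add_mul_log_sum_prob_nest {m : M} (hτ : τ (B m) ≠ 0) :
    τ (B m) * log (prob B θ τ V m) +
        (1 - τ (B m)) * log (∑ m' with B m' = B m, prob B θ τ V m') =
      θ * V m - log (∑ N, exp (inclusiveValue B θ τ V N)) := by
  have : Nonempty 𝒩 := ⟨B m⟩
  calc τ (B m) * log (prob B θ τ V m) +
        (1 - τ (B m)) * log (∑ m' with B m' = B m, prob B θ τ V m')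
      = log (nestProb B θ τ V (B m)) + τ (B m) * log (condProb B θ τ V m) := by
        rw [log_prob, sum_prob_nest θ τ V ⟨m, rfl⟩]
        ring
    _ = θ * V m - log (∑ N, exp (inclusiveValue B θ τ V N)) := by
        rw [log_nestProb, mul_log_condProb θ V hτ]
        ring

end NestedLogit

open NestedLogit in
theorem nested_logit_choice_equation_general
    {M 𝒩 : Type*} [Fintype M] [Nonempty M] [Fintype 𝒩] [DecidableEq 𝒩]
    {B : M → 𝒩} (hB : Function.Surjective B) {θ : ℝ} (hθ : θ ≠ 0)
    {τ : 𝒩 → ℝ} (hτ : ∀ N, τ N ≠ 0) (V : M → ℝ) :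
    ∑ m, V m * prob B θ τ V m -
      (1 / θ) * ∑ m, (τ (B m) * prob B θ τ V m * log (prob B θ τ V m) +
        (1 - τ (B m)) * prob B θ τ V m * log (∑ m' with B m' = B m, prob B θ τ V m'))
      = (1 / θ) * log (∑ N, exp (inclusiveValue B θ τ V N)) := by
  have : Nonempty 𝒩 := .map B ‹_›
  set p := prob B θ τ V
  set Z := ∑ N, exp (inclusiveValue B θ τ V N)
  have bracket_eq (m : M) :
      τ (B m) * p m * log (p m) + (1 - τ (B m)) * p m * log (∑ m' with B m' = B m, p m') =
        θ * (V m * p m) - log Z * p m := by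
    linear_combination p m * mul_log_prob_add_mul_log_sum_prob_nest θ V (hτ (B m))
  have sum_bracket_eq :
      ∑ m, (τ (B m) * p m * log (p m) +
        (1 - τ (B m)) * p m * log (∑ m' with B m' = B m, p m')) =
        θ * ∑ m, V m * p m - log Z := by
    simp only [bracket_eq]
    rw [sum_sub_distrib, ← mul_sum, ← mul_sum, sum_prob θ τ V hB, mul_one]
  rw [sum_bracket_eq]
  field_simp
  ring

/-- At the nested logit probability vector the nested choice equation
holds: the nested satisfaction objective equals `(1/θ) ln Σ_N exp(IV_N)`. -/
theorem nested_logit_choice_equation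
    {M 𝒩 : Type*} [Fintype M] [Nonempty M] [Fintype 𝒩] [DecidableEq 𝒩]
    (B : M → 𝒩) (hB : Function.Surjective B)
    (θ : ℝ) (hθ : 0 < θ)
    (τ : 𝒩 → ℝ) (hτ0 : ∀ N, 0 < τ N) (hτ1 : ∀ N, τ N ≤ 1)
    (V : M → ℝ)
    (IV : 𝒩 → ℝ)
    (hIV : ∀ N, IV N = τ N * Real.log (∑ m ∈ univ.filter (fun m => B m = N),
      Real.exp (θ * V m / τ N)))
    (p : M → ℝ)
    (hp : ∀ m, p m =
      (Real.exp (IV (B m)) / ∑ N, Real.exp (IV N)) *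
      (Real.exp (θ * V m / τ (B m)) /
        ∑ m' ∈ univ.filter (fun m' => B m' = B m), Real.exp (θ * V m' / τ (B m)))) :
    ∑ m, V m * p m -
      (1 / θ) * ∑ m, (τ (B m) * p m * Real.log (p m) +
        (1 - τ (B m)) * p m *
          Real.log (∑ m' ∈ univ.filter (fun m' => B m' = B m), p m'))
      = (1 / θ) * Real.log (∑ N, Real.exp (IV N)) := by
  obtain rfl : IV = NestedLogit.inclusiveValue B θ τ V := funext hIV
  obtain rfl : p = NestedLogit.prob B θ τ V := funext hp
  exact nested_logit_choice_equation_general hB hθ.ne' (fun N => (hτ0 N).ne') V
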